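/- arXiv:1104.1884 — 2 statements merged into one kernel-verified Lean document; each statement's English description precedes it below -/
import Mathlib

section
/- Let f : ℕ → (0,∞) be non-decreasing with f(n) → ∞, and suppose there exists K > 0 such that f(x+y) ≤ K·f(x)·f(y) for all positive integers x, y, and that limsup_{n→∞} (1/n)·log f(n) = 0. Then for every irreducible recurrent discrete-time Markov chain on a finite or countable state space, if there exist states i, j with E f(T_ij) < ∞ and E f(T_ji) < ∞, then E f(T_kℓ) < ∞ for all pairs of states k, ℓ. -/
/-!
For `t ≠ a`, splitting the first hitting time of `t` at the first visit to `a` writes the law of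
`T_xt` as the law of `T_xt` on `{T_xt < T_xa}` plus the convolution of the law of `T_xa` on
`{T_xa < T_xt}` with the law of `T_at`. By irreducibility both pieces inherit the moment bounds of
the hitting times they come from, and `f (x + y) ≤ K f(x) f(y)` makes finiteness of `E f(T)`
transitive, from `(x, a)` and `(a, t)` to `(x, t)`. So `E f(T_ii) < ∞`, whence `E f(T_ki) < ∞`
because an excursion from `i` visits `k` with positive probability. By transitivity through `i`, it
remains to bound `E f(T_il)`.

The law `F` of `T_il` solves the renewal equation `F = ν + μ * F`, where `μ` is the law of the
excursions from `i` that avoid `l` and has mass `< 1`. Replace `f` by the equivalent weight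
`g m = sup_n f (m + n) cⁿ`, finite for `c < 1` because `f` grows subexponentially. It satisfies both
`g (m + a) ≤ c⁻ᵃ g m` and `g (m + a) ≤ K f(a) g m`, so convolution with `μ` multiplies `g`-moments
by at most `∑ a, min(c⁻ᵃ, K f(a)) μ a`. By dominated convergence this factor tends, as `c → 1`, to a
limit `≤ ∑ a, μ a < 1`; fixing `c` close to `1`, the renewal inequality for the
truncations of `F` bounds their `g`-moments uniformly.
-/

open Filter
open scoped ENNReal

namespace MCPaper

variable {E : Type*}

open Classical in
/-- `hitAvoid P t a n x` is the probability that the chain with transition matrix `P`,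
started at `x`, is at `t` at time `n` while avoiding both `t` and `a` at times `1,…,n-1`.
For `t = a` this is the distribution of the first hitting time of `t`. -/
noncomputable def hitAvoid (P : E → E → ℝ≥0∞) (t a : E) : ℕ → E → ℝ≥0∞
  | 0, _ => 0
  | 1, x => P x t
  | n + 2, x => ∑' k : E, if k = t ∨ k = a then 0 else P x k * hitAvoid P t a (n + 1) k

/-- `firstHit P i j n = P_i(T_ij = n)`, the probability that the first hitting time of `j`
(first return time if `i = j`) starting from `i` equals `n`. -/
noncomputable def firstHit (P : E → E → ℝ≥0∞) (i j : E) (n : ℕ) : ℝ≥0∞ :=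
  hitAvoid P j j n i

/-- `P` is a stochastic matrix. -/
def IsStochastic (P : E → E → ℝ≥0∞) : Prop := ∀ i, ∑' j : E, P i j = 1

/-- irreducibility: any state can be reached from any other state. -/
def IsIrreducible (P : E → E → ℝ≥0∞) : Prop := ∀ i j : E, ∃ n : ℕ, 0 < firstHit P i j n

/-- recurrence: `P_i(T_ii < ∞) = 1` for every state `i`. -/
def IsRecurrent (P : E → E → ℝ≥0∞) : Prop := ∀ i : E, ∑' n : ℕ, firstHit P i i n = 1

/-- the generalized moment `E f(T_ij)` of the first hitting time of `j` from `i`. -/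
noncomputable def momGen (f : ℕ → ℝ) (P : E → E → ℝ≥0∞) (i j : E) : ℝ≥0∞ :=
  ∑' n : ℕ, ENNReal.ofReal (f n) * firstHit P i j n

open Finset.HasAntidiagonal (antidiagonal mem_antidiagonal)
open scoped Topology

/-! ### Convolutions and moments of laws on `ℕ` -/

section Moment

/-- Additive convolution of sequences: if `ρ` and `σ` are the laws of independent `ℕ`-valued
times, `conv ρ σ` is the law of their sum. -/
noncomputable def conv (ρ σ : ℕ → ℝ≥0∞) (n : ℕ) : ℝ≥0∞ :=
  ∑ p ∈ antidiagonal n, ρ p.1 * σ p.2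

/-- The `w`-moment `E[w(T); T < ∞]` of a time `T` with (possibly defective) law `ρ`. -/
noncomputable def moment (w ρ : ℕ → ℝ≥0∞) : ℝ≥0∞ :=
  ∑' n, w n * ρ n

/-- Submultiplicativity up to a constant `K`, at positive arguments. -/
def IsSubmulUpTo (K : ℝ≥0∞) (φ : ℕ → ℝ≥0∞) : Prop :=
  ∀ x y, 0 < x → 0 < y → φ (x + y) ≤ K * φ x * φ y

variable {φ ρ σ : ℕ → ℝ≥0∞} {K q : ℝ≥0∞}

lemma mul_le_conv_add (ρ σ : ℕ → ℝ≥0∞) (a b : ℕ) : ρ a * σ b ≤ conv ρ σ (a + b) :=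
  Finset.single_le_sum (f := fun p : ℕ × ℕ => ρ p.1 * σ p.2) (fun _ _ => zero_le)
    (a := (a, b)) (mem_antidiagonal.2 rfl)

lemma conv_add_one (hρ : ρ 0 = 0) (n : ℕ) :
    conv ρ σ (n + 1) = conv (fun k => ρ (k + 1)) σ n := by
  simp [conv, Finset.Nat.sum_antidiagonal_succ, hρ]

lemma moment_mono (w : ℕ → ℝ≥0∞) (h : ∀ n, ρ n ≤ σ n) : moment w ρ ≤ moment w σ :=
  ENNReal.tsum_le_tsum fun n => by gcongr; exact h n

lemma moment_add (w ρ σ : ℕ → ℝ≥0∞) : moment w (ρ + σ) = moment w ρ + moment w σ := by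
  simp only [moment, Pi.add_apply, mul_add, ENNReal.tsum_add]

lemma moment_conv (w ρ σ : ℕ → ℝ≥0∞) :
    moment w (conv ρ σ) = moment (fun b => moment (fun a => w (a + b)) ρ) σ := by
  simp only [moment, conv, ← ENNReal.tsum_mul_right]
  rw [ENNReal.tsum_comm, ← ENNReal.tsum_prod,
    ← (Finset.HasAntidiagonal.sigmaAntidiagonalEquivProd (A := ℕ)).tsum_eq, ENNReal.tsum_sigma']
  refine tsum_congr fun n => ?_
  rw [tsum_fintype, Finset.mul_sum, ← Finset.sum_coe_sort]
  refine Finset.sum_congr rfl fun p _ => ?_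
  simp [mem_antidiagonal.1 p.2, mul_assoc]

lemma moment_conv_le (hφ : IsSubmulUpTo K φ) (hρ : ρ 0 = 0) (hσ : σ 0 = 0) :
    moment φ (conv ρ σ) ≤ K * moment φ ρ * moment φ σ := by
  rw [moment_conv]
  simp only [moment, ← ENNReal.tsum_mul_left, ← ENNReal.tsum_mul_right]
  refine ENNReal.tsum_le_tsum fun b => ENNReal.tsum_le_tsum fun a => ?_
  rcases Nat.eq_zero_or_pos a with rfl | ha
  · simp [hρ]
  rcases Nat.eq_zero_or_pos b with rfl | hb
  · simp [hσ]
  calc φ (a + b) * ρ a * σ b ≤ K * φ a * φ b * ρ a * σ b := by gcongr; exact hφ a b ha hb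
    _ = K * (φ a * ρ a) * (φ b * σ b) := by ring

lemma moment_lt_top_of_mul_le_add (hφ : Monotone φ) (hq : q ≠ 0) (m : ℕ)
    (hle : ∀ n, q * ρ n ≤ σ (n + m)) (hσ : moment φ σ < ⊤) : moment φ ρ < ⊤ := by
  refine ENNReal.lt_top_of_mul_ne_top_right (ne_top_of_le_ne_top hσ.ne ?_) hq
  calc q * moment φ ρ = ∑' n, φ n * (q * ρ n) := by
        simp only [moment, ← ENNReal.tsum_mul_left, mul_left_comm]
    _ ≤ ∑' n, φ (n + m) * σ (n + m) := ENNReal.tsum_le_tsum fun n =>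
        mul_le_mul' (hφ (Nat.le_add_right n m)) (hle n)
    _ ≤ moment φ σ :=
        ENNReal.tsum_comp_le_tsum_of_injective (add_left_injective m) fun n => φ n * σ n

end Moment

/-! ### Defective renewal equations -/

section Renewal

variable {φ μ ν F : ℕ → ℝ≥0∞} {K c r : ℝ≥0∞}

lemma moment_le_div_of_le_add_conv {g : ℕ → ℝ≥0∞} (hr : r < 1)
    (hcontr : ∀ m, 0 < m → moment (fun a => g (a + m)) μ ≤ r * g m)
    (hF0 : F 0 = 0) (hF : moment g F ≠ ⊤) (hren : F ≤ ν + conv μ F) :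
    moment g F ≤ moment g ν / (1 - r) := by
  have hconv : moment g (conv μ F) ≤ r * moment g F := by
    rw [moment_conv]
    simp only [moment, ← ENNReal.tsum_mul_left, ← mul_assoc]
    refine ENNReal.tsum_le_tsum fun m => ?_
    rcases Nat.eq_zero_or_pos m with rfl | hm
    · simp [hF0]
    · gcongr
      exact hcontr m hm
  have hle : moment g F ≤ moment g ν + r * moment g F :=
    calc moment g F ≤ moment g (ν + conv μ F) := moment_mono g hren
      _ = moment g ν + moment g (conv μ F) := moment_add g ν _
      _ ≤ moment g ν + r * moment g F := by gcongr
  rw [ENNReal.le_div_iff_mul_le (.inl (tsub_pos_of_lt hr).ne')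
    (.inl (ENNReal.sub_ne_top ENNReal.one_ne_top)), ENNReal.mul_sub (fun _ _ => hF), mul_one,
    mul_comm _ r]
  exact tsub_le_iff_right.2 hle

lemma indicator_Iio_le_add_conv (hren : F ≤ ν + conv μ F) (N : ℕ) :
    (Set.Iio N).indicator F ≤ ν + conv μ ((Set.Iio N).indicator F) := by
  refine Set.indicator_le fun n (hn : n < N) => (hren n).trans_eq ?_
  refine congrArg (ν n + ·) (Finset.sum_congr rfl fun p hp => ?_)
  have hpN : p.2 < N := (Finset.HasAntidiagonal.antidiagonal.snd_le hp).trans_lt hn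
  rw [Set.indicator_of_mem (Set.mem_Iio.2 hpN)]

lemma moment_indicator_Iio (g F : ℕ → ℝ≥0∞) (N : ℕ) :
    moment g ((Set.Iio N).indicator F) = ∑ n ∈ Finset.range N, g n * F n := by
  rw [sum_eq_tsum_indicator, Finset.coe_range]
  exact tsum_congr fun n => (Set.indicator_mul_right _ g F).symm

lemma moment_lt_top_of_contraction {g : ℕ → ℝ≥0∞} (hr : r < 1)
    (hcontr : ∀ m, 0 < m → moment (fun a => g (a + m)) μ ≤ r * g m) (hg : ∀ n, g n ≠ ⊤)
    (hF0 : F 0 = 0) (hF : ∀ n, F n ≠ ⊤) (hren : F ≤ ν + conv μ F) (hν : moment g ν < ⊤) :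
    moment g F < ⊤ := by
  have htrunc (N : ℕ) : ∑ n ∈ Finset.range N, g n * F n ≤ moment g ν / (1 - r) := by
    rw [← moment_indicator_Iio]
    refine moment_le_div_of_le_add_conv hr hcontr ?_ ?_ (indicator_Iio_le_add_conv hren N)
    · exact Set.indicator_apply_eq_zero.2 fun _ => hF0
    · rw [moment_indicator_Iio]
      exact ENNReal.sum_ne_top.2 fun n _ => ENNReal.mul_ne_top (hg n) (hF n)
  exact (ENNReal.tsum_le_of_sum_range_le htrunc).trans_lt
    (ENNReal.div_lt_top hν.ne (tsub_pos_of_lt hr).ne')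

/-- `φ` grows more slowly than every exponential. -/
def IsSubexponential (φ : ℕ → ℝ≥0∞) : Prop :=
  ∀ c < 1, ⨆ n, φ n * c ^ n < ⊤

/-- The discounted future supremum of `φ`: a weight which, for monotone, submultiplicative and
subexponential `φ` and `0 < c < 1`, is comparable with `φ` at positive arguments but grows by a
factor of at most `c⁻¹` at each step. -/
noncomputable def discountedSup (φ : ℕ → ℝ≥0∞) (c : ℝ≥0∞) (m : ℕ) : ℝ≥0∞ :=
  ⨆ n, φ (m + n) * c ^ n

lemma le_discountedSup (φ : ℕ → ℝ≥0∞) (c : ℝ≥0∞) (n : ℕ) : φ n ≤ discountedSup φ c n := by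
  simpa [discountedSup] using le_iSup (fun k => φ (n + k) * c ^ k) 0

lemma discountedSup_mono (hφ : Monotone φ) (c : ℝ≥0∞) : Monotone (discountedSup φ c) :=
  fun _ _ h => iSup_mono fun n => by gcongr; exact hφ (by gcongr)

lemma discountedSup_add_le_inv_pow_mul (φ : ℕ → ℝ≥0∞) (hc0 : c ≠ 0) (hc : c ≠ ⊤) (a m : ℕ) :
    discountedSup φ c (a + m) ≤ (c ^ a)⁻¹ * discountedSup φ c m := by
  rw [← ENNReal.mul_le_iff_le_inv (pow_ne_zero a hc0) (ENNReal.pow_ne_top hc), discountedSup,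
    ENNReal.mul_iSup]
  refine iSup_le fun n => ?_
  calc c ^ a * (φ (a + m + n) * c ^ n) = φ (m + (a + n)) * c ^ (a + n) := by
        rw [show a + m + n = m + (a + n) by ring]; ring
    _ ≤ discountedSup φ c m := le_iSup (fun k => φ (m + k) * c ^ k) (a + n)

lemma discountedSup_add_le_mul (hφ : IsSubmulUpTo K φ) (c : ℝ≥0∞) {a m : ℕ} (ha : 0 < a)
    (hm : 0 < m) : discountedSup φ c (a + m) ≤ K * φ a * discountedSup φ c m := by
  refine iSup_le fun n => ?_
  calc φ (a + m + n) * c ^ n ≤ K * φ a * φ (m + n) * c ^ n := by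
        rw [add_assoc]; gcongr; exact hφ a (m + n) ha (by omega)
    _ = K * φ a * (φ (m + n) * c ^ n) := mul_assoc _ _ _
    _ ≤ K * φ a * discountedSup φ c m := by
        gcongr; exact le_iSup (fun k => φ (m + k) * c ^ k) n

lemma discountedSup_ne_top (hφ : IsSubexponential φ) (hc0 : c ≠ 0) (hc : c < 1) (m : ℕ) :
    discountedSup φ c m ≠ ⊤ := by
  have h0 : discountedSup φ c 0 < ⊤ := by simpa only [discountedSup, zero_add] using hφ c hc
  exact ne_top_of_le_ne_top
    (ENNReal.mul_ne_top (ENNReal.inv_ne_top.2 (pow_ne_zero m hc0)) h0.ne)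
    (discountedSup_add_le_inv_pow_mul φ hc0 hc.ne_top m 0)

lemma moment_discountedSup_lt_top (hK : K ≠ ⊤) (hmono : Monotone φ) (hsub : IsSubmulUpTo K φ)
    (hc : discountedSup φ c 1 ≠ ⊤) (hν0 : ν 0 = 0) (hν : moment φ ν < ⊤) :
    moment (discountedSup φ c) ν < ⊤ := by
  set C := K * discountedSup φ c 1
  calc moment (discountedSup φ c) ν ≤ ∑' n, C * (φ n * ν n) := by
        refine ENNReal.tsum_le_tsum fun n => ?_
        rcases Nat.eq_zero_or_pos n with rfl | hn
        · simp [hν0]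
        calc discountedSup φ c n * ν n ≤ discountedSup φ c (n + 1) * ν n := by
              gcongr; exact discountedSup_mono hmono c n.le_succ
          _ ≤ K * φ n * discountedSup φ c 1 * ν n := by
              gcongr; exact discountedSup_add_le_mul hsub c hn one_pos
          _ = C * (φ n * ν n) := by ring
    _ = C * moment φ ν := ENNReal.tsum_mul_left
    _ < ⊤ := ENNReal.mul_lt_top (ENNReal.mul_lt_top hK.lt_top hc.lt_top) hν

lemma moment_discountedSup_add_le (hsub : IsSubmulUpTo K φ) (hc0 : c ≠ 0) (hc : c ≠ ⊤)
    (hμ0 : μ 0 = 0) {m : ℕ} (hm : 0 < m) :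
    moment (fun a => discountedSup φ c (a + m)) μ ≤
      moment (fun a => min (c ^ a)⁻¹ (K * φ a)) μ * discountedSup φ c m := by
  rw [moment, moment, ← ENNReal.tsum_mul_right]
  refine ENNReal.tsum_le_tsum fun a => ?_
  rcases Nat.eq_zero_or_pos a with rfl | ha
  · simp [hμ0]
  rw [mul_right_comm, min_mul]
  gcongr
  exact le_min (discountedSup_add_le_inv_pow_mul φ hc0 hc a m)
    (discountedSup_add_le_mul hsub c ha hm)

lemma tendsto_moment_min_inv_pow {b : ℕ → ℝ≥0∞} (hb : moment b μ ≠ ⊤) :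
    Tendsto (fun c : ℝ≥0∞ => moment (fun a => min (c ^ a)⁻¹ (b a)) μ) (𝓝 1)
      (𝓝 (moment (fun a => min 1 (b a)) μ)) := by
  simp only [moment, ← MeasureTheory.lintegral_count] at hb ⊢
  refine MeasureTheory.tendsto_lintegral_filter_of_dominated_convergence (fun a => b a * μ a)
    (.of_forall fun _ => .of_discrete)
    (.of_forall fun c => .of_forall fun a => by gcongr; exact min_le_right _ _) hb
    (.of_forall fun a => ?_)
  rcases eq_or_ne (b a) 0 with hba | hba
  · simp [hba]
  have hlim : Tendsto (fun c : ℝ≥0∞ => min (c ^ a)⁻¹ (b a)) (𝓝 1) (𝓝 (min 1 (b a))) := by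
    have hcont : Continuous fun c : ℝ≥0∞ => min (c ^ a)⁻¹ (b a) :=
      (ENNReal.continuous_pow a).inv.min continuous_const
    simpa using hcont.tendsto 1
  exact ENNReal.Tendsto.mul_const hlim (.inl (lt_min one_pos hba.bot_lt).ne')

lemma exists_moment_min_inv_pow_lt_one {b : ℕ → ℝ≥0∞} (hμ : ∑' n, μ n < 1)
    (hb : moment b μ ≠ ⊤) :
    ∃ c, c ≠ 0 ∧ c < 1 ∧ moment (fun a => min (c ^ a)⁻¹ (b a)) μ < 1 := by
  have hlim : moment (fun a => min 1 (b a)) μ < 1 :=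
    (ENNReal.tsum_le_tsum fun a => mul_le_of_le_one_left' (min_le_left _ _)).trans_lt hμ
  have hnear : ∀ᶠ c in 𝓝[<] (1 : ℝ≥0∞),
      c ≠ 0 ∧ moment (fun a => min (c ^ a)⁻¹ (b a)) μ < 1 :=
    ((eventually_ne_nhds one_ne_zero).and
      ((tendsto_moment_min_inv_pow hb).eventually_lt_const hlim)).filter_mono nhdsWithin_le_nhds
  obtain ⟨c, ⟨hc0, hcμ⟩, hc1⟩ := (hnear.and self_mem_nhdsWithin).exists
  exact ⟨c, hc0, hc1, hcμ⟩

lemma moment_lt_top_of_le_add_conv (hK : K ≠ ⊤) (hmono : Monotone φ) (hsub : IsSubmulUpTo K φ)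
    (hexp : IsSubexponential φ) (hμ0 : μ 0 = 0) (hμ : ∑' n, μ n < 1) (hφμ : moment φ μ < ⊤)
    (hν0 : ν 0 = 0) (hφν : moment φ ν < ⊤) (hF0 : F 0 = 0) (hF : ∀ n, F n ≠ ⊤)
    (hren : F ≤ ν + conv μ F) : moment φ F < ⊤ := by
  have hKφμ : moment (fun a => K * φ a) μ ≠ ⊤ := by
    simp only [moment, mul_assoc, ENNReal.tsum_mul_left]
    exact ENNReal.mul_ne_top hK hφμ.ne
  obtain ⟨c, hc0, hc1, hr⟩ := exists_moment_min_inv_pow_lt_one hμ hKφμ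
  have hg := discountedSup_ne_top hexp hc0 hc1
  calc moment φ F ≤ moment (discountedSup φ c) F :=
        ENNReal.tsum_le_tsum fun n => by gcongr; exact le_discountedSup φ c n
    _ < ⊤ := moment_lt_top_of_contraction hr
        (fun m hm => moment_discountedSup_add_le hsub hc0 hc1.ne_top hμ0 hm) hg hF0 hF hren
        (moment_discountedSup_lt_top hK hmono hsub (hg 1) hν0 hφν)

end Renewal

/-! ### First hitting times -/

section Chain

/-- Rows of total mass at most one; the missing mass of row `i` is the probability that the chain
is killed on leaving `i`. -/
def IsSubstochastic (P : E → E → ℝ≥0∞) : Prop := ∀ i, ∑' j : E, P i j ≤ 1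

/-- `hitBefore P x t a` is the law of `T_xt` on the event that `t` is hit before `a`: `hitAvoid`
with its arguments in the order of `firstHit`, which is the case `t = a`. -/
noncomputable def hitBefore (P : E → E → ℝ≥0∞) (x t a : E) (n : ℕ) : ℝ≥0∞ :=
  hitAvoid P t a n x

variable {P : E → E → ℝ≥0∞} {x t a : E}

@[simp]
lemma hitBefore_zero (P : E → E → ℝ≥0∞) (x t a : E) : hitBefore P x t a 0 = 0 := rfl

@[simp]
lemma hitBefore_one (P : E → E → ℝ≥0∞) (x t a : E) : hitBefore P x t a 1 = P x t := rfl

lemma hitBefore_self (P : E → E → ℝ≥0∞) (x t : E) : hitBefore P x t t = firstHit P x t := rfl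

@[simp]
lemma firstHit_zero (P : E → E → ℝ≥0∞) (x t : E) : firstHit P x t 0 = 0 := rfl

@[simp]
lemma firstHit_one (P : E → E → ℝ≥0∞) (x t : E) : firstHit P x t 1 = P x t := rfl

open Classical in
lemma hitBefore_add_two (P : E → E → ℝ≥0∞) (x t a : E) (n : ℕ) :
    hitBefore P x t a (n + 2) =
      ∑' k, if k = t ∨ k = a then 0 else P x k * hitBefore P k t a (n + 1) := rfl

open Classical in
lemma firstHit_add_two (P : E → E → ℝ≥0∞) (x t : E) (n : ℕ) :
    firstHit P x t (n + 2) = ∑' k, if k = t then 0 else P x k * firstHit P k t (n + 1) := by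
  simp only [← hitBefore_self, hitBefore_add_two, or_self]

open Classical in
lemma conv_hitBefore_add_two (P : E → E → ℝ≥0∞) (x t a : E) (σ : ℕ → ℝ≥0∞) (n : ℕ) :
    conv (hitBefore P x a t) σ (n + 2) = P x a * σ (n + 1) +
      ∑' k, if k = a ∨ k = t then 0 else P x k * conv (hitBefore P k a t) σ (n + 1) := by
  rw [conv_add_one (hitBefore_zero P x a t), conv, Finset.Nat.sum_antidiagonal_succ, zero_add,
    hitBefore_one]
  congr 1
  simp only [add_assoc, Nat.reduceAdd, hitBefore_add_two, ← ENNReal.tsum_mul_right]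
  rw [← Summable.tsum_finsetSum fun _ _ => ENNReal.summable]
  refine tsum_congr fun k => ?_
  split_ifs
  · simp
  · rw [conv_add_one (hitBefore_zero P k a t), conv, Finset.mul_sum]
    simp only [mul_assoc]

/-- The strong Markov property at the first visit to `a`. -/
lemma firstHit_eq_hitBefore_add_conv (hta : t ≠ a) (x : E) :
    firstHit P x t = hitBefore P x t a + conv (hitBefore P x a t) (firstHit P a t) := by
  classical
  funext n
  induction n generalizing x with
  | zero => simp [conv]
  | succ n ih =>
    rcases n with _ | n
    · simp [conv, Finset.Nat.sum_antidiagonal_succ]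
    have hsplit (k : E) : (if k = a then 0 else if k = t then 0 else
          P x k * firstHit P k t (n + 1)) =
        (if k = t ∨ k = a then 0 else P x k * hitBefore P k t a (n + 1)) +
          if k = a ∨ k = t then 0 else
            P x k * conv (hitBefore P k a t) (firstHit P a t) (n + 1) := by
      by_cases hka : k = a
      · simp [hka]
      by_cases hkt : k = t
      · simp [hkt]
      simp only [hka, hkt, or_self, if_false, ih k, Pi.add_apply, mul_add]
    calc firstHit P x t (n + 2)
        = P x a * firstHit P a t (n + 1) + ∑' k, if k = a then 0 else if k = t then 0 else
            P x k * firstHit P k t (n + 1) := by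
          rw [firstHit_add_two, ENNReal.tsum_eq_add_tsum_ite a, if_neg hta.symm]
      _ = hitBefore P x t a (n + 2) + conv (hitBefore P x a t) (firstHit P a t) (n + 2) := by
          simp only [hsplit, ENNReal.tsum_add, hitBefore_add_two, conv_hitBefore_add_two]
          ring

lemma hitBefore_le_firstHit (P : E → E → ℝ≥0∞) (x t a : E) (n : ℕ) :
    hitBefore P x t a n ≤ firstHit P x t n := by
  rcases eq_or_ne t a with rfl | hta
  · rfl
  · rw [firstHit_eq_hitBefore_add_conv hta]
    exact le_self_add

lemma hitBefore_mul_firstHit_le (hta : t ≠ a) (x : E) (p q : ℕ) :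
    hitBefore P x a t p * firstHit P a t q ≤ firstHit P x t (p + q) := by
  rw [firstHit_eq_hitBefore_add_conv hta x]
  exact (mul_le_conv_add _ _ p q).trans le_add_self

lemma sum_range_hitBefore_le_one (hP : IsSubstochastic P) (x t a : E) (N : ℕ) :
    ∑ n ∈ Finset.range (N + 1), hitBefore P x t a n ≤ 1 := by
  classical
  induction N generalizing x with
  | zero => simp
  | succ N ih =>
    have hk (k : E) : ∑ n ∈ Finset.range N, hitBefore P k t a (n + 1) ≤ 1 := by
      simpa [Finset.sum_range_succ'] using ih k
    calc ∑ n ∈ Finset.range (N + 2), hitBefore P x t a n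
        = P x t + ∑ n ∈ Finset.range N, hitBefore P x t a (n + 2) := by
          rw [Finset.sum_range_succ', Finset.sum_range_succ', hitBefore_zero, add_zero, add_comm,
            zero_add, hitBefore_one]
      _ = P x t + ∑' k, if k = t ∨ k = a then 0 else
            P x k * ∑ n ∈ Finset.range N, hitBefore P k t a (n + 1) := by
          simp only [hitBefore_add_two]
          rw [← Summable.tsum_finsetSum fun _ _ => ENNReal.summable]
          congr! 3 with k
          split_ifs <;> simp [Finset.mul_sum]
      _ ≤ P x t + ∑' k, if k = t then 0 else P x k := by
          gcongr with k
          by_cases hkt : k = t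
          · simp [hkt]
          · simp only [hkt, false_or, if_false]
            split_ifs
            · exact zero_le
            · exact mul_le_of_le_one_right' (hk k)
      _ = ∑' k, P x k := (ENNReal.tsum_eq_add_tsum_ite t).symm
      _ ≤ 1 := hP x

lemma tsum_hitBefore_le_one (hP : IsSubstochastic P) (x t a : E) :
    ∑' n, hitBefore P x t a n ≤ 1 :=
  ENNReal.tsum_le_of_sum_range_le fun N =>
    (Finset.sum_le_sum_of_subset (Finset.range_subset_range.2 N.le_succ)).trans
      (sum_range_hitBefore_le_one hP x t a N)

lemma firstHit_ne_top (hP : IsSubstochastic P) (x t : E) (n : ℕ) : firstHit P x t n ≠ ⊤ :=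
  ne_top_of_le_ne_top ENNReal.one_ne_top
    ((ENNReal.le_tsum n).trans (tsum_hitBefore_le_one hP x t t))

/-- Otherwise every excursion from `a` would return to `a` without having visited `t`. -/
lemma exists_hitBefore_pos (h : ∃ n, 0 < firstHit P a t n) : ∃ n, 0 < hitBefore P a t a n := by
  rcases eq_or_ne t a with rfl | hta
  · exact h
  by_contra! hnot
  have hzero : ∀ n, firstHit P a t n = 0 := by
    intro n
    induction n using Nat.strong_induction_on with
    | _ n ih =>
      rw [firstHit_eq_hitBefore_add_conv hta, Pi.add_apply, nonpos_iff_eq_zero.1 (hnot n), zero_add]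
      refine Finset.sum_eq_zero fun p hp => ?_
      have hpn := mem_antidiagonal.1 hp
      rcases Nat.eq_zero_or_pos p.1 with hp0 | hp0
      · rw [hp0, hitBefore_zero, zero_mul]
      · rw [ih p.2 (by omega), mul_zero]
  obtain ⟨n, hn⟩ := h
  exact hn.ne' (hzero n)

lemma tsum_hitBefore_self_lt_one (hP : IsSubstochastic P) (hirr : IsIrreducible P) {i l : E}
    (hil : i ≠ l) : ∑' n, hitBefore P i i l n < 1 := by
  obtain ⟨p, hp⟩ := exists_hitBefore_pos (hirr i l)
  obtain ⟨q, hq⟩ := hirr l i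
  have hsum : ∑' n, hitBefore P i i l n ≠ ⊤ :=
    ne_top_of_le_ne_top ENNReal.one_ne_top (tsum_hitBefore_le_one hP i i l)
  have hstrict : hitBefore P i i l (p + q) < firstHit P i i (p + q) := by
    rw [firstHit_eq_hitBefore_add_conv hil i]
    exact ENNReal.lt_add_right (ENNReal.ne_top_of_tsum_ne_top hsum _)
      ((ENNReal.mul_pos hp.ne' hq.ne').trans_le (mul_le_conv_add _ _ p q)).ne'
  exact (ENNReal.tsum_lt_tsum hsum (hitBefore_le_firstHit P i i l) hstrict).trans_le
    (tsum_hitBefore_le_one hP i i i)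

end Chain

/-! ### Transfer of moments between hitting times -/

section Solidarity

variable {P : E → E → ℝ≥0∞} {φ : ℕ → ℝ≥0∞} {K : ℝ≥0∞} {x t a : E}

lemma moment_hitBefore_lt_top (a : E) (h : moment φ (firstHit P x t) < ⊤) :
    moment φ (hitBefore P x t a) < ⊤ :=
  (moment_mono φ (hitBefore_le_firstHit P x t a)).trans_lt h

lemma moment_hitBefore_swap_lt_top (hmono : Monotone φ) (hirr : IsIrreducible P) (a : E)
    (h : moment φ (firstHit P x t) < ⊤) : moment φ (hitBefore P x a t) < ⊤ := by
  rcases eq_or_ne t a with rfl | hta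
  · exact h
  obtain ⟨m, hm⟩ := hirr a t
  refine moment_lt_top_of_mul_le_add hmono hm.ne' m (fun n => ?_) h
  rw [mul_comm]
  exact hitBefore_mul_firstHit_le hta x n m

lemma moment_firstHit_trans (hK : K ≠ ⊤) (hmono : Monotone φ) (hsub : IsSubmulUpTo K φ)
    (hirr : IsIrreducible P) (hxa : moment φ (firstHit P x a) < ⊤)
    (hat : moment φ (firstHit P a t) < ⊤) : moment φ (firstHit P x t) < ⊤ := by
  rcases eq_or_ne t a with rfl | hta
  · exact hxa
  rw [firstHit_eq_hitBefore_add_conv hta x, moment_add]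
  refine ENNReal.add_lt_top.2 ⟨moment_hitBefore_swap_lt_top hmono hirr t hxa, ?_⟩
  refine (moment_conv_le hsub (hitBefore_zero P x a t) (firstHit_zero P a t)).trans_lt ?_
  exact ENNReal.mul_lt_top (ENNReal.mul_lt_top hK.lt_top (moment_hitBefore_lt_top t hxa)) hat

lemma moment_firstHit_to_lt_top (hmono : Monotone φ) (hirr : IsIrreducible P) {i : E}
    (hi : moment φ (firstHit P i i) < ⊤) (k : E) : moment φ (firstHit P k i) < ⊤ := by
  rcases eq_or_ne i k with rfl | hik
  · exact hi
  obtain ⟨m, hm⟩ := exists_hitBefore_pos (hirr i k)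
  refine moment_lt_top_of_mul_le_add hmono hm.ne' m (fun n => ?_) hi
  rw [add_comm]
  exact hitBefore_mul_firstHit_le hik i m n

lemma moment_firstHit_from_lt_top (hK : K ≠ ⊤) (hmono : Monotone φ) (hsub : IsSubmulUpTo K φ)
    (hexp : IsSubexponential φ) (hP : IsSubstochastic P) (hirr : IsIrreducible P) {i : E}
    (hi : moment φ (firstHit P i i) < ⊤) (l : E) : moment φ (firstHit P i l) < ⊤ := by
  rcases eq_or_ne i l with rfl | hil
  · exact hi
  exact moment_lt_top_of_le_add_conv hK hmono hsub hexp (hitBefore_zero P i i l)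
    (tsum_hitBefore_self_lt_one hP hirr hil) (moment_hitBefore_lt_top l hi)
    (hitBefore_zero P i l i) (moment_hitBefore_swap_lt_top hmono hirr l hi)
    (firstHit_zero P i l) (firstHit_ne_top hP i l)
    (firstHit_eq_hitBefore_add_conv hil.symm i).le

end Solidarity

/-! ### Real-valued weights -/

lemma isSubmulUpTo_ofReal {f : ℕ → ℝ} {K : ℝ} (hf : ∀ n, 0 ≤ f n)
    (hsub : ∀ x y : ℕ, 0 < x → 0 < y → f (x + y) ≤ K * f x * f y) :
    IsSubmulUpTo (ENNReal.ofReal K) fun n => ENNReal.ofReal (f n) := fun x y hx hy => by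
  rw [← ENNReal.ofReal_mul' (hf x), ← ENNReal.ofReal_mul' (hf y)]
  exact ENNReal.ofReal_le_ofReal (hsub x y hx hy)

lemma eventually_mul_pow_le_one {f : ℕ → ℝ} (hpos : ∀ n, 0 < f n)
    (hlog : limsup (fun n : ℕ => ((Real.log (f n) / n : ℝ) : EReal)) atTop ≤ 0)
    {c : ℝ} (hc0 : 0 < c) (hc1 : c < 1) : ∀ᶠ n in atTop, f n * c ^ n ≤ 1 := by
  have hrate : (0 : EReal) < (-Real.log c : ℝ) := by
    exact_mod_cast neg_pos.2 (Real.log_neg hc0 hc1)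
  filter_upwards [eventually_lt_of_limsup_lt (hlog.trans_lt hrate), eventually_gt_atTop 0]
    with n hn hn0
  have hn0' : (0 : ℝ) < n := by exact_mod_cast hn0
  have hlogf : Real.log (f n) < -Real.log c * n := (div_lt_iff₀ hn0').1 (EReal.coe_lt_coe_iff.1 hn)
  have hprod : 0 < f n * c ^ n := mul_pos (hpos n) (pow_pos hc0 n)
  rw [← Real.log_nonpos_iff hprod.le, Real.log_mul (hpos n).ne' (pow_pos hc0 n).ne', Real.log_pow]
  linarith

lemma isSubexponential_ofReal {f : ℕ → ℝ} (hpos : ∀ n, 0 < f n)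
    (hlog : limsup (fun n : ℕ => ((Real.log (f n) / n : ℝ) : EReal)) atTop ≤ 0) :
    IsSubexponential fun n => ENNReal.ofReal (f n) := by
  intro c hc
  rcases eq_or_ne c 0 with rfl | hc0
  · refine (iSup_le fun n => ?_).trans_lt (ENNReal.ofReal_lt_top (r := f 0))
    rcases n with _ | n <;> simp
  have hcR : 0 < c.toReal := ENNReal.toReal_pos hc0 hc.ne_top
  have hcR1 : c.toReal < 1 := ENNReal.toReal_lt_of_lt_ofReal (by simpa using hc)
  obtain ⟨B, hB⟩ := (isBoundedUnder_of_eventually_le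
    (eventually_mul_pow_le_one hpos hlog hcR hcR1)).bddAbove_range
  refine (iSup_le fun n => ?_).trans_lt (ENNReal.ofReal_lt_top (r := B))
  rw [← ENNReal.ofReal_toReal hc.ne_top, ← ENNReal.ofReal_pow hcR.le,
    ← ENNReal.ofReal_mul (hpos n).le]
  exact ENNReal.ofReal_le_ofReal (hB ⟨n, rfl⟩)

/-- Solidarity of moments without recurrence: for a transient or killed chain, `momGen f P k l` is
`E[f(T_kl); T_kl < ∞]`. -/
theorem stmt_1_general {f : ℕ → ℝ} (hpos : ∀ n, 0 < f n) (hmono : Monotone f) {K : ℝ}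
    (hsub : ∀ x y : ℕ, 0 < x → 0 < y → f (x + y) ≤ K * f x * f y)
    (hlog : limsup (fun n : ℕ => ((Real.log (f n) / n : ℝ) : EReal)) atTop ≤ 0)
    {S : Type*} {P : S → S → ℝ≥0∞} (hP : IsSubstochastic P) (hirr : IsIrreducible P)
    {i j : S} (hij : momGen f P i j < ⊤) (hji : momGen f P j i < ⊤) (k l : S) :
    momGen f P k l < ⊤ := by
  set φ : ℕ → ℝ≥0∞ := fun n => ENNReal.ofReal (f n)
  have hφ : Monotone φ := fun _ _ h => ENNReal.ofReal_le_ofReal (hmono h)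
  have hφsub : IsSubmulUpTo (ENNReal.ofReal K) φ := isSubmulUpTo_ofReal (fun n => (hpos n).le) hsub
  have hφexp : IsSubexponential φ := isSubexponential_ofReal hpos hlog
  have hK : ENNReal.ofReal K ≠ ⊤ := ENNReal.ofReal_ne_top
  have hii : moment φ (firstHit P i i) < ⊤ := moment_firstHit_trans hK hφ hφsub hirr hij hji
  exact moment_firstHit_trans hK hφ hφsub hirr (moment_firstHit_to_lt_top hφ hirr hii k)
    (moment_firstHit_from_lt_top hK hφ hφsub hφexp hP hirr hii l)

theorem stmt_1 (f : ℕ → ℝ) (hpos : ∀ n, 0 < f n) (hmono : Monotone f)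
    (htop : Tendsto f atTop atTop)
    (K : ℝ) (hK : 0 < K)
    (hsub : ∀ x y : ℕ, 0 < x → 0 < y → f (x + y) ≤ K * f x * f y)
    (hlog : limsup (fun n : ℕ => ((Real.log (f n) / n : ℝ) : EReal)) atTop = 0)
    (S : Type*) [Countable S] (P : S → S → ℝ≥0∞)
    (hP : IsStochastic P) (hirr : IsIrreducible P) (hrec : IsRecurrent P)
    (i j : S) (hij : momGen f P i j < ⊤) (hji : momGen f P j i < ⊤) :
    ∀ k l : S, momGen f P k l < ⊤ :=
  stmt_1_general hpos hmono hsub hlog.le (fun x => (hP x).le) hirr hij hji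

end MCPaper
end

section
/- Let f : ℕ → (0,∞) be non-decreasing with f(n) → ∞, and let an irreducible recurrent discrete-time Markov chain on a finite or countable state space be given. Suppose E f(T_ii) < ∞ for a state i, and let j ≠ i be any state. Then the conditional expectation E[f(T_ij) | T_ij < T_ii] under P_i is finite; equivalently, E f(V_ij) < ∞. -/
/-!
By irreducibility some `m` has `c := P_j(T_ji = m) > 0`. Hitting `j` at time `n` before returning
to `i`, and then hitting `i` for the first time `m` steps later, is one way for `T_ii = n + m` to
occur, so `P_i(T_ij = n, T_ij < T_ii) * c ≤ P_i(T_ii = n + m)`. Multiplying by `f n ≤ f (n + m)` and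
summing over `n` gives `c * E_i[f(T_ij); T_ij < T_ii] ≤ E f(T_ii) < ∞`.

The conditioning event has positive probability because a shortest path of positive probability
from `i` to `j` does not revisit `i`.
-/

open Filter
open scoped ENNReal

namespace MCPaper

variable {E : Type*}

section

variable {P : E → E → ℝ≥0∞} {i j t a x : E} {m n : ℕ}

theorem mul_hitAvoid_le_hitAvoid_succ {k : E} (hkt : k ≠ t) (hka : k ≠ a) :
    P x k * hitAvoid P t a n k ≤ hitAvoid P t a (n + 1) x := by
  cases n with
  | zero => simp [hitAvoid]
  | succ n =>
    rw [hitAvoid]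
    refine le_trans ?_ (ENNReal.le_tsum k)
    simp [hkt, hka]

theorem exists_of_hitAvoid_add_two_pos (h : 0 < hitAvoid P t a (n + 2) x) :
    ∃ k, k ≠ t ∧ k ≠ a ∧ 0 < P x k ∧ 0 < hitAvoid P t a (n + 1) k := by
  rw [hitAvoid, pos_iff_ne_zero, ne_eq, ENNReal.tsum_eq_zero, not_forall] at h
  obtain ⟨k, hk⟩ := h
  simp only [ite_eq_left_iff, mul_eq_zero, not_or, Classical.not_imp] at hk
  exact ⟨k, hk.1.1, hk.1.2, pos_iff_ne_zero.2 hk.2.1, pos_iff_ne_zero.2 hk.2.2⟩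

theorem hitAvoid_mul_firstHit_le_firstHit_add (hji : j ≠ i) :
    hitAvoid P j i n x * firstHit P j i m ≤ firstHit P x i (n + m) := by
  induction n using Nat.twoStepInduction generalizing x with
  | zero => simp [hitAvoid]
  | one =>
    rw [hitAvoid, add_comm 1 m]
    exact mul_hitAvoid_le_hitAvoid_succ hji hji
  | more n _ ih =>
    rw [Nat.add_right_comm] at ih ⊢
    simp only [firstHit, hitAvoid, ← ENNReal.tsum_mul_right] at ih ⊢
    gcongr with k
    by_cases hki : k = i
    · simp [hki]
    by_cases hkj : k = j
    · simp [hkj]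
    simp only [hki, hkj, or_self, if_false, mul_assoc]
    gcongr
    exact ih

theorem tsum_mul_hitAvoid_mul_firstHit_le {f : ℕ → ℝ≥0∞} (hf : Monotone f) (hji : j ≠ i) :
    (∑' n, f n * hitAvoid P j i n x) * firstHit P j i m ≤ ∑' n, f n * firstHit P x i n :=
  calc (∑' n, f n * hitAvoid P j i n x) * firstHit P j i m
      = ∑' n, f n * (hitAvoid P j i n x * firstHit P j i m) := by
        simp only [← ENNReal.tsum_mul_right, mul_assoc]
    _ ≤ ∑' n, f (n + m) * firstHit P x i (n + m) := by
        gcongr with n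
        · exact hf (Nat.le_add_right n m)
        · exact hitAvoid_mul_firstHit_le_firstHit_add hji
    _ ≤ ∑' n, f n * firstHit P x i n :=
        ENNReal.tsum_comp_le_tsum_of_injective (add_left_injective m) fun n =>
          f n * firstHit P x i n

theorem hitAvoid_pos_or_exists_lt_firstHit_pos (a : E) (h : 0 < firstHit P x t n) :
    0 < hitAvoid P t a n x ∨ ∃ m < n, 0 < firstHit P a t m := by
  induction n using Nat.twoStepInduction generalizing x with
  | zero => simp [firstHit, hitAvoid] at h
  | one => exact .inl h
  | more n _ ih =>
    obtain ⟨k, hkt, -, hxk, hk⟩ := exists_of_hitAvoid_add_two_pos h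
    obtain rfl | hka := eq_or_ne k a
    · exact .inr ⟨n + 1, by lia, hk⟩
    obtain hpos | ⟨m, hmn, hm⟩ := ih hk
    · exact .inl <| (ENNReal.mul_pos hxk.ne' hpos.ne').trans_le <|
        mul_hitAvoid_le_hitAvoid_succ hkt hka
    · exact .inr ⟨m, by lia, hm⟩

theorem exists_hitAvoid_self_pos (h : ∃ n, 0 < firstHit P a t n) :
    ∃ n, 0 < hitAvoid P t a n a := by
  classical
  obtain hpos | ⟨m, hlt, hm⟩ := hitAvoid_pos_or_exists_lt_firstHit_pos a (Nat.find_spec h)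
  · exact ⟨_, hpos⟩
  · exact absurd hm (Nat.find_min h hlt)

theorem stmt_7_general {f : ℕ → ℝ≥0∞} (hf : Monotone f) (hji : j ≠ i)
    (hreach : ∃ n, 0 < firstHit P i j n) (hreturn : ∃ n, 0 < firstHit P j i n)
    (hfin : ∑' n, f n * firstHit P i i n < ⊤) :
    0 < ∑' n, hitAvoid P j i n i ∧ ∑' n, f n * hitAvoid P j i n i < ⊤ := by
  constructor
  · obtain ⟨n, hn⟩ := exists_hitAvoid_self_pos hreach
    exact hn.trans_le (ENNReal.le_tsum n)
  · obtain ⟨m, hm⟩ := hreturn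
    exact ENNReal.lt_top_of_mul_ne_top_left
      ((tsum_mul_hitAvoid_mul_firstHit_le hf hji).trans_lt hfin).ne hm.ne'

end

theorem stmt_7 (f : ℕ → ℝ) (hpos : ∀ n, 0 < f n) (hmono : Monotone f)
    (htop : Tendsto f atTop atTop)
    (S : Type*) [Countable S] (P : S → S → ℝ≥0∞)
    (hP : IsStochastic P) (hirr : IsIrreducible P) (hrec : IsRecurrent P)
    (i j : S) (hji : j ≠ i) (hfin : momGen f P i i < ⊤) :
    0 < (∑' n : ℕ, hitAvoid P j i n i) ∧
      (∑' n : ℕ, ENNReal.ofReal (f n) * hitAvoid P j i n i) /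
          (∑' n : ℕ, hitAvoid P j i n i) < ⊤ := by
  have ⟨hhit, hmoment⟩ :=
    stmt_7_general (ENNReal.ofReal_mono.comp hmono) hji (hirr i j) (hirr j i) hfin
  exact ⟨hhit, ENNReal.div_lt_top hmoment.ne hhit.ne'⟩

end MCPaper
end
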